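/- Let E be a complex Banach space of functions on ℝ⁺ satisfying (H1), (H2), (H3). There exists a constant C > 0, depending only on E, such that for every Wiener-Hopf operator T on E there is a sequence (φ_n)_{n∈ℕ} ⊂ C_c^∞(ℝ) with lim_{n→∞} ‖T_{φ_n} f − T f‖ = 0 for every f ∈ E, and ‖T_{φ_n}‖ ≤ C ‖T‖ for all n ∈ ℕ. -/

import Mathlib

open Complex Filter Topology

noncomputable section

/-- Translation by `a`, cut off to `ℝ⁺`: `(transFun a f) x = f (x - a)` for `x ≥ 0`,
and `0` for `x < 0`.  For `a ≥ 0` and `f` supported in `ℝ⁺` this is the operator `S_a`,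
and for `a = -b ≤ 0` it is the operator `S_{-b} : f ↦ f (· + b)`. -/
def transFun {α : Type*} [Zero α] (a : ℝ) (f : ℝ → α) : ℝ → α :=
  fun x => if 0 ≤ x then f (x - a) else 0

/-- Modulation: `(modFun a f) x = e^{iax} f x`. -/
def modFun (a : ℝ) (f : ℝ → ℂ) : ℝ → ℂ :=
  fun x => Complex.exp (Complex.I * (a : ℂ) * (x : ℂ)) * f x

/-- `C^∞` functions with compact support contained in `(0, ∞)`. -/
def IsTestPlus (g : ℝ → ℂ) : Prop :=
  ContDiff ℝ (⊤ : ℕ∞) g ∧ HasCompactSupport g ∧ tsupport g ⊆ Set.Ioi (0 : ℝ)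

/-- `C^∞` functions with compact support on `ℝ`. -/
def IsTest (g : ℝ → ℂ) : Prop :=
  ContDiff ℝ (⊤ : ℕ∞) g ∧ HasCompactSupport g

/-- The Fourier transformation `(𝓕 f)(ξ) = (2π)^{-1/2} ∫ f x e^{-iξx} dx`
(defined by this integral formula; it is applied below only to integrable functions,
on which it agrees with the Fourier–Plancherel transformation). -/
def FT {H : Type*} [NormedAddCommGroup H] [NormedSpace ℂ H] (f : ℝ → H) : ℝ → H :=
  fun ξ => (Real.sqrt (2 * Real.pi))⁻¹ •
    ∫ x : ℝ, Complex.exp (-(Complex.I * (ξ : ℂ) * (x : ℂ))) • f x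

/-- The inverse Fourier transformation `(𝓕⁻¹ f)(x) = (2π)^{-1/2} ∫ f ξ e^{iξx} dξ`. -/
def FTinv {H : Type*} [NormedAddCommGroup H] [NormedSpace ℂ H] (f : ℝ → H) : ℝ → H :=
  fun x => (Real.sqrt (2 * Real.pi))⁻¹ •
    ∫ ξ : ℝ, Complex.exp (Complex.I * (ξ : ℂ) * (x : ℂ)) • f ξ

/-- A complex Banach space `E` of (a.e.-equivalence classes of) locally integrable
functions on `ℝ⁺` — realized as functions on `ℝ` vanishing a.e. on `(-∞, 0)` —
satisfying the hypotheses (H1), (H2) and (H3). -/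
structure WHSpace where
  /-- the carrier Banach space -/
  E : Type
  [nacg : NormedAddCommGroup E]
  [nsp : NormedSpace ℂ E]
  [cpl : CompleteSpace E]
  /-- the realization of elements of `E` as functions on `ℝ⁺`; two elements of `E`
  coincide iff their realizations agree almost everywhere -/
  toFun : E →ₗ[ℂ] (ℝ → ℂ)
  inj : ∀ f g : E, toFun f =ᵐ[MeasureTheory.volume] toFun g → f = g
  meas : ∀ f : E, MeasureTheory.AEStronglyMeasurable (toFun f) MeasureTheory.volume
  supp : ∀ f : E, ∀ᵐ x ∂MeasureTheory.volume, x < 0 → toFun f x = 0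
  /-- (H1): `E ⊆ L¹_loc` -/
  locInt : ∀ f : E, MeasureTheory.LocallyIntegrable (toFun f) MeasureTheory.volume
  /-- (H1): the inclusion `E ⊆ L¹_loc(ℝ⁺)` is continuous -/
  incl_cont : ∀ K : Set ℝ, IsCompact K → ∃ C > 0, ∀ f : E,
    ∫ x in K, ‖toFun f x‖ ≤ C * ‖f‖
  /-- (H1): `C_c^∞((0,∞)) ⊆ E` -/
  test_mem : ∀ g : ℝ → ℂ, IsTestPlus g → ∃ f : E, toFun f =ᵐ[MeasureTheory.volume] g
  /-- (H1): the inclusion `C_c^∞((0,∞)) ⊆ E` is continuous -/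
  test_cont : ∀ K : Set ℝ, IsCompact K → ∃ C > 0, ∃ N : ℕ,
    ∀ (f : E) (g : ℝ → ℂ), IsTestPlus g → tsupport g ⊆ K →
      toFun f =ᵐ[MeasureTheory.volume] g →
      ‖f‖ ≤ C * ∑ k ∈ Finset.range (N + 1), ⨆ x : ℝ, ‖iteratedDeriv k g x‖
  /-- (H1): `C_c^∞((0,∞))` is dense in `E` -/
  test_dense : Dense {f : E | ∃ g : ℝ → ℂ, IsTestPlus g ∧ toFun f =ᵐ[MeasureTheory.volume] g}
  /-- (H2): the translations `S_a`, `a ∈ ℝ`, act boundedly on `E` -/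
  S : ℝ → E →L[ℂ] E
  S_spec : ∀ (a : ℝ) (f : E), toFun (S a f) =ᵐ[MeasureTheory.volume] transFun a (toFun f)
  /-- (H2): `sup_{a ∈ K} ‖S_a‖ < ∞` for every compact `K ⊆ ℝ` -/
  S_bdd : ∀ K : Set ℝ, IsCompact K → ∃ C : ℝ, ∀ a ∈ K, ‖S a‖ ≤ C
  /-- (H3): the modulations `Γ_a`, `a ∈ ℝ`, act boundedly on `E` -/
  Mod : ℝ → E →L[ℂ] E
  Mod_spec : ∀ (a : ℝ) (f : E), toFun (Mod a f) =ᵐ[MeasureTheory.volume] modFun a (toFun f)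
  /-- (H3): `sup_{a ∈ ℝ} ‖Γ_a‖ < ∞` -/
  Mod_bdd : ∃ C : ℝ, ∀ a : ℝ, ‖Mod a‖ ≤ C

attribute [instance] WHSpace.nacg WHSpace.nsp WHSpace.cpl

open MeasureTheory

/-- A Wiener-Hopf operator on `E`: a bounded operator `T` with `S_{-a} T S_a = T`
for all `a ≥ 0`. -/
def IsWienerHopf (W : WHSpace) (T : W.E →L[ℂ] W.E) : Prop :=
  ∀ a : ℝ, 0 ≤ a → (W.S (-a)).comp (T.comp (W.S a)) = T

/-- `ρ(S)`, the spectral radius of `S = S_1`. -/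
def WHSpace.rS (W : WHSpace) : ℝ := (spectralRadius ℂ (W.S 1)).toReal

/-- `ρ(S_{-1})`, the spectral radius of `S_{-1}`. -/
def WHSpace.rSm (W : WHSpace) : ℝ := (spectralRadius ℂ (W.S (-1))).toReal

/-- `I_E = [-ln ρ(S_{-1}), ln ρ(S)]`. -/
def WHSpace.IE (W : WHSpace) : Set ℝ := Set.Icc (-Real.log W.rSm) (Real.log W.rS)

/-- `U_E = {z ∈ ℂ : Im z ∈ I_E}`. -/
def WHSpace.UE (W : WHSpace) : Set ℂ := {z : ℂ | z.im ∈ W.IE}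

/-- The open strip `int U_E = {z ∈ ℂ : -ln ρ(S_{-1}) < Im z < ln ρ(S)}`. -/
def WHSpace.stripE (W : WHSpace) : Set ℂ :=
  {z : ℂ | z.im ∈ Set.Ioo (-Real.log W.rSm) (Real.log W.rS)}

/-- `A = T_φ`, i.e. `A f = P⁺ (φ ∗ f)` for every `f ∈ C_c^∞((0,∞))`.
(Such an operator is unique, by density of `C_c^∞((0,∞))` in `E`.) -/
def IsConvOp (W : WHSpace) (φ : ℝ → ℂ) (A : W.E →L[ℂ] W.E) : Prop :=
  ∀ (f : W.E) (g : ℝ → ℂ), IsTestPlus g → W.toFun f =ᵐ[volume] g →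
    ∀ᵐ x ∂(volume.restrict (Set.Ici (0 : ℝ))),
      W.toFun (A f) x = ∫ y : ℝ, φ y * g (x - y)

/-! Fix a test function `θ` on `(0, ∞)`, let `T_θ = ∫ θ y • S_y` and let `t` be the element of `E`
represented by `θ`. Convolutions commute, so `T T_θ f = T T_g t = ∫ g y • T S_y t` for a test
function `g` representing `f`. The identity `S_{-a} T S_a = T` makes the functions `T S_y t`,
shifted back by `y`, restrictions of a single locally integrable `ψ` on `ℝ`; hence `T T_θ` is
convolution with `ψ`, and `T T_θ T_θ` is convolution with the smooth function `ψ ⋆ θ`. As the mass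
of `θ` concentrates at `0`, these operators tend strongly to `T`, with norms controlled by (H2).

Conjugating by `Γ_a` multiplies the symbol of a convolution operator by `e^{iax}`. Averaging the
conjugates by `Γ_{2πra}` against `k a` therefore multiplies the symbol by `𝓕⁻ k (r x)`, which has
compact support when `𝓕⁻ k` does. By (H3) the norm grows at most by a constant independent of `r`,
and if `∫ k = 1` the strong limit does not change as `r → 0`. -/

open Function (support uncurry notMem_support)
open ContinuousLinearMap (mul opNorm_comp_le)
open scoped ContDiff Convolution Pointwise FourierTransform SchwartzMap Real

section StrongTopology

variable {ι 𝕜 E F : Type*} [NontriviallyNormedField 𝕜] [NormedAddCommGroup E] [NormedSpace 𝕜 E]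
  [NormedAddCommGroup F] [NormedSpace 𝕜 F]

theorem tendsto_clm_apply_of_tendsto {P : ι → E →L[𝕜] F} {C : ℝ} (hP : ∀ i, ‖P i‖ ≤ C)
    {l : Filter ι} {x : ι → E} {x₀ : E} {y : F} (hx : Tendsto x l (𝓝 x₀))
    (hy : Tendsto (fun i => P i x₀) l (𝓝 y)) : Tendsto (fun i => P i (x i)) l (𝓝 y) := by
  have hdiff : Tendsto (fun i => P i (x i - x₀)) l (𝓝 0) := by
    refine squeeze_zero_norm (fun i => (P i).le_of_opNorm_le (hP i) _) ?_
    simpa using (tendsto_iff_norm_sub_tendsto_zero.1 hx).const_mul C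
  simpa using hdiff.add hy

theorem tendsto_clm_apply_of_dense {P : ι → E →L[𝕜] F} {C : ℝ} (hP : ∀ i, ‖P i‖ ≤ C)
    {l : Filter ι} {Q : E →L[𝕜] F} {D : Set E} (hD : Dense D)
    (h : ∀ f ∈ D, Tendsto (fun i => P i f) l (𝓝 (Q f))) (f : E) :
    Tendsto (fun i => P i f) l (𝓝 (Q f)) := by
  have hequi : Equicontinuous ((↑) ∘ P : ι → E → F) :=
    ((NormedSpace.equicontinuous_TFAE P).out 1 5).2 (⟨C, hP⟩ : ∃ C, ∀ i, ‖P i‖ ≤ C)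
  exact closure_minimal h (hequi.isClosed_setOfPred_tendsto Q.continuous) (hD f)

theorem continuousOn_clm_apply_of_dense {X : Type*} [TopologicalSpace X] {P : X → E →L[𝕜] F}
    {s : Set X} {C : ℝ} (hP : ∀ a ∈ s, ‖P a‖ ≤ C) {D : Set E} (hD : Dense D)
    (h : ∀ f ∈ D, ContinuousOn (fun a => P a f) s) (f : E) : ContinuousOn (fun a => P a f) s := by
  rw [continuousOn_iff_continuous_domRestrict, continuous_iff_continuousAt]
  exact fun b => tendsto_clm_apply_of_dense (P := fun a : s => P a) (Q := P b)
    (fun a => hP a a.2) hD (fun g hg => (h g hg).domRestrict.continuousAt) f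

end StrongTopology

section StrongIntegral

variable {α 𝕜 E F : Type*} [MeasurableSpace α] {μ : Measure α} [RCLike 𝕜]
  [NormedAddCommGroup E] [NormedSpace 𝕜 E] [NormedAddCommGroup F] [NormedSpace 𝕜 F]

/-- Strong measurability and an integrable bound `g` on the norms: the hypotheses under which
`strongIntegral μ P` is given by the integral formula. -/
structure IsStronglyDominated (μ : Measure α) (P : α → E →L[𝕜] F) (g : α → ℝ) : Prop where
  aestronglyMeasurable (f : E) : AEStronglyMeasurable (fun a => P a f) μ
  integrable_bound : Integrable g μ
  norm_le (a : α) : ‖P a‖ ≤ g a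

theorem IsStronglyDominated.integrable_apply {P : α → E →L[𝕜] F} {g : α → ℝ}
    (h : IsStronglyDominated μ P g) (f : E) : Integrable (fun a => P a f) μ :=
  (h.integrable_bound.mul_const ‖f‖).mono' (h.aestronglyMeasurable f)
    (ae_of_all _ fun a => (P a).le_of_opNorm_le (h.norm_le a) f)

variable [NormedSpace ℝ F]

theorem IsStronglyDominated.norm_integral_apply_le {P : α → E →L[𝕜] F} {g : α → ℝ}
    (h : IsStronglyDominated μ P g) (f : E) : ‖∫ a, P a f ∂μ‖ ≤ (∫ a, g a ∂μ) * ‖f‖ := by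
  rw [← integral_mul_const]
  exact norm_integral_le_of_norm_le (h.integrable_bound.mul_const ‖f‖)
    (ae_of_all _ fun a => (P a).le_of_opNorm_le (h.norm_le a) f)

open Classical in
/-- The operator `f ↦ ∫ a, P a f ∂μ`, the integral of the family `P` in the strong operator
topology; it is `0` when this formula does not define a bounded operator. -/
def strongIntegral (μ : Measure α) (P : α → E →L[𝕜] F) : E →L[𝕜] F :=
  if h : ∃ A : E →L[𝕜] F, ∀ f, A f = ∫ a, P a f ∂μ then h.choose else 0

variable [SMulCommClass ℝ 𝕜 F]

theorem exists_clm_apply_eq_integral {L : α → E →ₗ[𝕜] F} {C : ℝ}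
    (hL : ∀ f, Integrable (fun a => L a f) μ) (hC : ∀ f, ‖∫ a, L a f ∂μ‖ ≤ C * ‖f‖) :
    ∃ A : E →L[𝕜] F, ∀ f, A f = ∫ a, L a f ∂μ :=
  ⟨LinearMap.mkContinuous
    { toFun f := ∫ a, L a f ∂μ
      map_add' f g := by simp only [map_add, integral_add (hL f) (hL g)]
      map_smul' c f := by simp only [map_smul, integral_smul, RingHom.id_apply] } C hC,
    fun _ => rfl⟩

namespace IsStronglyDominated

variable {P : α → E →L[𝕜] F} {g : α → ℝ}

theorem strongIntegral_apply (h : IsStronglyDominated μ P g) (f : E) :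
    strongIntegral μ P f = ∫ a, P a f ∂μ := by
  have hex : ∃ A : E →L[𝕜] F, ∀ f, A f = ∫ a, P a f ∂μ :=
    exists_clm_apply_eq_integral (L := fun a => (P a).toLinearMap) h.integrable_apply
      h.norm_integral_apply_le
  rw [strongIntegral, dif_pos hex]
  exact hex.choose_spec f

theorem norm_strongIntegral_le (h : IsStronglyDominated μ P g) :
    ‖strongIntegral μ P‖ ≤ ∫ a, g a ∂μ := by
  refine ContinuousLinearMap.opNorm_le_bound _
    (integral_nonneg fun a => (norm_nonneg _).trans (h.norm_le a)) fun f => ?_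
  rw [h.strongIntegral_apply]
  exact h.norm_integral_apply_le f

end IsStronglyDominated

end StrongIntegral

section SmoothFamilies

variable {𝕜 P F : Type*} [NontriviallyNormedField 𝕜] [NormedAddCommGroup P] [NormedSpace 𝕜 P]
  [NormedAddCommGroup F] [NormedSpace 𝕜 F]

theorem contDiff_uncurry_iteratedDeriv {u : P → 𝕜 → F} (hu : ContDiff 𝕜 ∞ (uncurry u)) (k : ℕ) :
    ContDiff 𝕜 ∞ (uncurry fun p => iteratedDeriv k (u p)) := by
  induction k generalizing u with
  | zero => simpa only [iteratedDeriv_zero] using hu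
  | succ k ih =>
    have hderiv : ContDiff 𝕜 ∞ (uncurry fun p => deriv (u p)) :=
      ContDiff.fderiv_apply (f := fun q : P × 𝕜 => u q.1) (m := ∞)
        (hu.comp (contDiff_fst.fst.prodMk contDiff_snd)) contDiff_snd contDiff_const (by simp)
    simpa only [iteratedDeriv_succ'] using ih hderiv

theorem tsupport_iteratedDeriv_subset (k : ℕ) (f : 𝕜 → F) :
    tsupport (iteratedDeriv k f) ⊆ tsupport f := by
  induction k with
  | zero => rw [iteratedDeriv_zero]
  | succ k ih =>
    rw [iteratedDeriv_succ]
    exact tsupport_deriv_subset.trans ih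

end SmoothFamilies

theorem exists_forall_ae_eq_of_compatible {α β : Type*} [MeasurableSpace α] {μ : Measure α}
    {s : ℕ → Set α} {u : ℕ → α → β}
    (h : ∀ m n, m ≤ n → ∀ᵐ x ∂μ, x ∈ s m → u m x = u n x) :
    ∃ ψ : α → β, ∀ n, ∀ᵐ x ∂μ, x ∈ s n → ψ x = u n x := by
  classical
  refine ⟨fun x => if hx : ∃ n, x ∈ s n then u (Nat.find hx) x else u 0 x, fun n => ?_⟩
  have hle : ∀ᵐ x ∂μ, ∀ m ≤ n, x ∈ s m → u m x = u n x := by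
    simpa only [ae_all_iff] using fun m => h m n
  filter_upwards [hle] with x hx hxn
  have hex : ∃ m, x ∈ s m := ⟨n, hxn⟩
  rw [dif_pos hex]
  exact hx _ (Nat.find_min' hex hxn) (Nat.find_spec hex)

section Convolution

theorem integrable_convolution_integrand_restrict {𝕜 G E E' F : Type*}
    [NontriviallyNormedField 𝕜] [NormedAddCommGroup E] [NormedSpace 𝕜 E] [NormedAddCommGroup E']
    [NormedSpace 𝕜 E'] [NormedAddCommGroup F] [NormedSpace 𝕜 F] [AddGroup G] [TopologicalSpace G]
    [IsTopologicalAddGroup G] [T2Space G] [SecondCountableTopology G] [MeasurableSpace G]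
    [BorelSpace G] {μ : Measure G} [SFinite μ] [μ.IsAddRightInvariant] (L : E →L[𝕜] E' →L[𝕜] F)
    {f : G → E} {g : G → E'} (hf : Integrable f μ) (hfs : HasCompactSupport f)
    (hg : LocallyIntegrable g μ) {K : Set G} (hK : IsCompact K) :
    Integrable (fun p : G × G => L (f p.2) (g (p.1 - p.2))) ((μ.restrict K).prod μ) := by
  have hK' : IsCompact (K - tsupport f) := by
    simpa only [sub_eq_add_neg] using hK.add hfs.isCompact.neg
  have hgK' : Integrable ((K - tsupport f).indicator g) μ :=
    (integrable_indicator_iff hK'.measurableSet).2 (hg.integrableOn_isCompact hK')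
  have hprod : (μ.restrict K).prod μ = (μ.prod μ).restrict (K ×ˢ Set.univ) := by
    rw [← Measure.prod_restrict, Measure.restrict_univ]
  rw [hprod]
  refine (hf.convolution_integrand L hgK').restrict.congr ?_
  filter_upwards [ae_restrict_mem (hK.measurableSet.prod .univ)] with p hp
  by_cases hy : p.2 ∈ tsupport f
  · rw [Set.indicator_of_mem (Set.sub_mem_sub hp.1 hy)]
  · simp only [image_eq_zero_of_notMem_tsupport hy, map_zero, zero_apply]

theorem convolution_mul_comm {G A : Type*} [AddCommGroup G] [MeasurableSpace G] [MeasurableAdd G]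
    [MeasurableNeg G] {μ : Measure G} [μ.IsAddLeftInvariant] [μ.IsNegInvariant] [NormedCommRing A]
    [NormedAlgebra ℝ A] (f g : G → A) : f ⋆[mul ℝ A, μ] g = g ⋆[mul ℝ A, μ] f := by
  rw [← convolution_flip, ContinuousLinearMap.flip_mul]

theorem convolution_mul_assoc {G A : Type*} [AddCommGroup G] [TopologicalSpace G]
    [IsTopologicalAddGroup G] [T2Space G] [LocallyCompactSpace G] [SecondCountableTopology G]
    [MeasurableSpace G] [BorelSpace G] {μ : Measure G} [SFinite μ] [IsFiniteMeasureOnCompacts μ]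
    [μ.IsAddLeftInvariant] [NormedRing A] [NormedAlgebra ℝ A] [CompleteSpace A]
    {f g h : G → A} (hf : LocallyIntegrable f μ) (hg : Continuous g) (hgs : HasCompactSupport g)
    (hh : Continuous h) (hhs : HasCompactSupport h) :
    (f ⋆[mul ℝ A, μ] g) ⋆[mul ℝ A, μ] h = f ⋆[mul ℝ A, μ] (g ⋆[mul ℝ A, μ] h) := by
  ext x
  refine convolution_assoc (mul ℝ A) (mul ℝ A) (mul ℝ A) (mul ℝ A)
    (fun a b c => by simp only [ContinuousLinearMap.mul_apply', mul_assoc])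
    hf.aestronglyMeasurable hg.aestronglyMeasurable hh.aestronglyMeasurable
    (ae_of_all _ fun y => hgs.convolutionExists_right _ hf hg y)
    (ae_of_all _ fun y =>
      hhs.norm.convolutionExists_right _ hg.norm.locallyIntegrable hh.norm y) ?_
  exact (hgs.norm.convolution _ hhs.norm).convolutionExists_right _ (fun y => (hf y).norm)
    (hhs.norm.continuous_convolution_right _ hg.norm.locallyIntegrable hh.norm) x

end Convolution

section Modulation

theorem norm_modFun_apply (a : ℝ) (g : ℝ → ℂ) (x : ℝ) : ‖modFun a g x‖ = ‖g x‖ := by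
  rw [modFun, norm_mul, mul_assoc, ← ofReal_mul, norm_exp_I_mul_ofReal, one_mul]

theorem contDiff_uncurry_modFun {g : ℝ → ℂ} (hg : ContDiff ℝ ∞ g) :
    ContDiff ℝ ∞ (uncurry fun a => modFun a g) := by
  have hexp : ContDiff ℝ ∞ fun p : ℝ × ℝ => cexp (I * (p.1 : ℂ) * (p.2 : ℂ)) :=
    ((contDiff_const.mul (ofRealCLM.contDiff.comp contDiff_fst)).mul
      (ofRealCLM.contDiff.comp contDiff_snd)).cexp
  exact hexp.mul (hg.comp contDiff_snd)

theorem tsupport_modFun_subset (a : ℝ) (g : ℝ → ℂ) : tsupport (modFun a g) ⊆ tsupport g :=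
  tsupport_mul_subset_right

theorem modFun_convolution (a : ℝ) (φ g : ℝ → ℂ) :
    modFun a (φ ⋆[mul ℝ ℂ] g) = modFun a φ ⋆[mul ℝ ℂ] modFun a g := by
  ext x
  simp only [modFun, convolution_def, ContinuousLinearMap.mul_apply', ← integral_const_mul]
  refine integral_congr_ae (ae_of_all _ fun y => ?_)
  have hexp : cexp (I * a * x) = cexp (I * a * y) * cexp (I * a * ((x - y : ℝ) : ℂ)) := by
    rw [← Complex.exp_add]
    push_cast
    ring_nf
  simp only [hexp]
  ring

end Modulation

namespace IsTestPlus

variable {θ g : ℝ → ℂ}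

theorem integrable (hg : IsTestPlus g) : Integrable g :=
  hg.1.continuous.integrable_of_hasCompactSupport hg.2.1

theorem eq_zero_of_nonpos (hg : IsTestPlus g) {x : ℝ} (hx : x ≤ 0) : g x = 0 :=
  image_eq_zero_of_notMem_tsupport fun h => hx.not_gt (hg.2.2 h)

theorem exists_support_subset_Icc (hg : IsTestPlus g) : ∃ R, support g ⊆ Set.Icc 0 R := by
  obtain ⟨R, hR⟩ := hg.2.1.isCompact.bddAbove
  exact ⟨R, fun x hx => ⟨(hg.2.2 (subset_tsupport g hx)).le, hR (subset_tsupport g hx)⟩⟩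

theorem of_tsupport_subset (hg : IsTestPlus g) (hθ : ContDiff ℝ ∞ θ) (h : tsupport θ ⊆ tsupport g) :
    IsTestPlus θ :=
  ⟨hθ, hg.2.1.of_isClosed_subset (isClosed_tsupport θ) h, h.trans hg.2.2⟩

protected theorem modFun (hg : IsTestPlus g) (a : ℝ) : IsTestPlus (modFun a g) :=
  hg.of_tsupport_subset ((contDiff_uncurry_modFun hg.1).comp (contDiff_const.prodMk contDiff_id))
    (tsupport_modFun_subset a g)

protected theorem convolution (hθ : IsTestPlus θ) (hg : IsTestPlus g) :
    IsTestPlus (θ ⋆[mul ℝ ℂ] g) := by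
  refine ⟨hg.2.1.contDiff_convolution_right _ hθ.1.continuous.locallyIntegrable hg.1,
    hθ.2.1.convolution _ hg.2.1, ?_⟩
  have hsub : tsupport (θ ⋆[mul ℝ ℂ] g) ⊆ tsupport θ + tsupport g :=
    closure_minimal ((support_convolution_subset _).trans
      (Set.add_subset_add (subset_tsupport θ) (subset_tsupport g)))
      (hθ.2.1.isCompact.add hg.2.1.isCompact).isClosed
  intro x hx
  obtain ⟨y, hy, z, hz, rfl⟩ := hsub hx
  exact add_pos (Set.mem_Ioi.1 (hθ.2.2 hy)) (Set.mem_Ioi.1 (hg.2.2 hz))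

end IsTestPlus

section CompactlySupportedWeight

variable {X F : Type*} [TopologicalSpace X] [MeasurableSpace X] {ν : Measure X}
  [NormedAddCommGroup F] [NormedSpace ℝ F]

theorem integral_smul_integral_comm_of_hasCompactSupport [OpensMeasurableSpace X] {α : Type*}
    [MeasurableSpace α] {μ : Measure α} [SFinite μ] [SFinite ν]
    {h : X → ℝ} (hc : Continuous h) (hs : HasCompactSupport h) {u : α → X → F}
    (hu : Integrable (fun p : X × α => u p.2 p.1) ((ν.restrict (tsupport h)).prod μ)) :
    ∫ x, h x • ∫ a, u a x ∂μ ∂ν = ∫ a, ∫ x, h x • u a x ∂ν ∂μ := by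
  obtain ⟨M, hM⟩ := hc.bounded_above_of_compact_support hs
  have hrestrict (v : X → F) : ∫ x, h x • v x ∂ν = ∫ x in tsupport h, h x • v x ∂ν :=
    (setIntegral_eq_integral_of_forall_compl_eq_zero fun x hx => by
      rw [image_eq_zero_of_notMem_tsupport hx, zero_smul]).symm
  have hhu : Integrable (fun p : X × α => h p.1 • u p.2 p.1)
      ((ν.restrict (tsupport h)).prod μ) :=
    hu.bdd_smul M hc.measurable.aestronglyMeasurable.comp_fst (ae_of_all _ fun p => hM p.1)
  calc ∫ x, h x • ∫ a, u a x ∂μ ∂ν = ∫ x in tsupport h, ∫ a, h x • u a x ∂μ ∂ν := by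
        simp only [hrestrict, integral_smul]
    _ = ∫ a, ∫ x in tsupport h, h x • u a x ∂ν ∂μ :=
        integral_integral_swap (f := fun x a => h x • u a x) hhu
    _ = ∫ a, ∫ x, h x • u a x ∂ν ∂μ := by simp only [hrestrict]

theorem norm_integral_smul_le_mul_setIntegral_norm {h : X → ℝ} {M : ℝ} (hM : ∀ x, ‖h x‖ ≤ M)
    {f : X → F} (hf : IntegrableOn f (tsupport h) ν) :
    ‖∫ x, h x • f x ∂ν‖ ≤ M * ∫ x in tsupport h, ‖f x‖ ∂ν := by
  rw [← setIntegral_eq_integral_of_forall_compl_eq_zero (s := tsupport h) fun x hx => by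
    rw [image_eq_zero_of_notMem_tsupport hx, zero_smul], ← integral_const_mul]
  refine norm_integral_le_of_norm_le (hf.norm.const_mul M) (ae_of_all _ fun x => ?_)
  rw [norm_smul]
  exact mul_le_mul_of_nonneg_right (hM x) (norm_nonneg _)

end CompactlySupportedWeight

namespace WHSpace

variable (W : WHSpace)

section TranslationsModulations

theorem S_zero_apply (f : W.E) : W.S 0 f = f := by
  apply W.inj
  filter_upwards [W.S_spec 0 f, W.supp f] with x hS hsupp
  rw [hS, transFun, sub_zero]
  split_ifs with hx
  · rfl
  · exact (hsupp (not_le.1 hx)).symm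

theorem S_apply_S (a : ℝ) {b : ℝ} (hb : 0 ≤ b) (f : W.E) : W.S a (W.S b f) = W.S (a + b) f := by
  apply W.inj
  filter_upwards [W.S_spec a (W.S b f), (eventually_sub_right_iff volume a).2 (W.S_spec b f),
    W.S_spec (a + b) f, (eventually_sub_right_iff volume (a + b)).2 (W.supp f)]
    with x hab hb' hsum hsupp
  rw [hab, hsum, transFun, transFun, hb', transFun, sub_sub]
  by_cases hx : 0 ≤ x - a
  · rw [if_pos hx]
  · rw [if_neg hx, hsupp (by linarith)]

theorem toFun_S_apply_of_isTestPlus {f : W.E} {g : ℝ → ℂ} (hg : IsTestPlus g)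
    (hfg : W.toFun f =ᵐ[volume] g) {a : ℝ} (ha : 0 ≤ a) :
    W.toFun (W.S a f) =ᵐ[volume] fun x => g (x - a) := by
  filter_upwards [W.S_spec a f, (eventually_sub_right_iff volume a).2 hfg] with x hS hx
  rw [hS, transFun, hx]
  split_ifs with h0
  · rfl
  · exact (hg.eq_zero_of_nonpos (by linarith)).symm

theorem Mod_zero_apply (f : W.E) : W.Mod 0 f = f := by
  apply W.inj
  filter_upwards [W.Mod_spec 0 f] with x hx
  rw [hx, modFun, ofReal_zero, mul_zero, zero_mul, Complex.exp_zero, one_mul]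

theorem toFun_Mod_apply {f : W.E} {g : ℝ → ℂ} (hfg : W.toFun f =ᵐ[volume] g) (a : ℝ) :
    W.toFun (W.Mod a f) =ᵐ[volume] modFun a g := by
  filter_upwards [W.Mod_spec a f, hfg] with x hMod hx
  rw [hMod, modFun, hx, modFun]

end TranslationsModulations

section StrongContinuity

theorem exists_norm_le_of_norm_iteratedDeriv_le {K : Set ℝ} (hK : IsCompact K) :
    ∃ C > 0, ∃ N : ℕ, ∀ (f : W.E) (g : ℝ → ℂ) (δ : ℝ), IsTestPlus g → tsupport g ⊆ K →
      W.toFun f =ᵐ[volume] g → 0 ≤ δ → (∀ k ≤ N, ∀ x ∈ K, ‖iteratedDeriv k g x‖ ≤ δ) →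
      ‖f‖ ≤ C * δ := by
  obtain ⟨C, hC, N, hN⟩ := W.test_cont K hK
  refine ⟨C * (N + 1), by positivity, N, fun f g δ hg hgK hfg hδ h => ?_⟩
  have hsup (k : ℕ) (hk : k ∈ Finset.range (N + 1)) : ⨆ x, ‖iteratedDeriv k g x‖ ≤ δ := by
    refine ciSup_le fun x => ?_
    by_cases hx : x ∈ K
    · exact h k (Nat.lt_succ_iff.1 (Finset.mem_range.1 hk)) x hx
    · have hxg : x ∉ tsupport (iteratedDeriv k g) :=
        fun hxg => hx (hgK (tsupport_iteratedDeriv_subset k g hxg))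
      rwa [image_eq_zero_of_notMem_tsupport hxg, norm_zero]
  calc ‖f‖ ≤ C * ∑ k ∈ Finset.range (N + 1), ⨆ x, ‖iteratedDeriv k g x‖ := hN f g hg hgK hfg
    _ ≤ C * ∑ _k ∈ Finset.range (N + 1), δ := by gcongr with k hk; exact hsup k hk
    _ = C * (N + 1) * δ := by
      rw [Finset.sum_const, Finset.card_range, nsmul_eq_mul, Nat.cast_succ, mul_assoc]

theorem continuousOn_of_contDiff_uncurry {P : Type*} [NormedAddCommGroup P] [NormedSpace ℝ P]
    {u : P → ℝ → ℂ} (hu : ContDiff ℝ ∞ (uncurry u)) {s : Set P} {K : Set ℝ} (hK : IsCompact K)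
    (hK0 : K ⊆ Set.Ioi 0) (huK : ∀ a ∈ s, tsupport (u a) ⊆ K) {F : P → W.E}
    (hF : ∀ a ∈ s, W.toFun (F a) =ᵐ[volume] u a) : ContinuousOn F s := by
  obtain ⟨C, hC, N, hN⟩ := W.exists_norm_le_of_norm_iteratedDeriv_le hK
  have hua (a : P) : ContDiff ℝ ∞ (u a) := hu.comp (contDiff_const.prodMk contDiff_id)
  refine fun b hb => Metric.tendsto_nhds.2 fun ε hε => ?_
  have hδ : 0 < ε / (2 * C) := by positivity
  have hclose (k : ℕ) : ∀ᶠ a in 𝓝[s] b, ∀ x ∈ K,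
      dist (iteratedDeriv k (u a) x) (iteratedDeriv k (u b) x) < ε / (2 * C) := by
    obtain ⟨v, hv, hvK⟩ := hK.mem_uniformity_of_prod
      (contDiff_uncurry_iteratedDeriv hu k).continuous.continuousOn hb
      (Metric.dist_mem_uniformity hδ)
    exact mem_of_superset hv hvK
  filter_upwards [(Finset.range (N + 1)).eventually_all.2 fun k _ => hclose k,
    self_mem_nhdsWithin] with a hab ha
  have hsub : tsupport (u a - u b) ⊆ K :=
    (tsupport_sub _ _).trans (Set.union_subset (huK a ha) (huK b hb))
  have htest : IsTestPlus (u a - u b) :=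
    ⟨(hua a).sub (hua b), hK.of_isClosed_subset (isClosed_tsupport _) hsub, hsub.trans hK0⟩
  have hae : W.toFun (F a - F b) =ᵐ[volume] u a - u b := by
    rw [map_sub]
    exact (hF a ha).sub (hF b hb)
  have hle : ‖F a - F b‖ ≤ C * (ε / (2 * C)) := by
    refine hN _ _ _ htest hsub hae hδ.le fun k hk x hx => ?_
    rw [iteratedDeriv_sub ((hua a).of_le (mod_cast le_top)).contDiffAt
      ((hua b).of_le (mod_cast le_top)).contDiffAt, ← dist_eq_norm]
    exact (hab k (Finset.mem_range.2 (Nat.lt_succ_of_le hk)) x hx).le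
  calc dist (F a) (F b) ≤ C * (ε / (2 * C)) := by rwa [dist_eq_norm]
    _ = ε / 2 := by field_simp
    _ < ε := half_lt_self hε

theorem continuousOn_S_apply (R : ℝ) (f : W.E) :
    ContinuousOn (fun a => W.S a f) (Set.Icc 0 R) := by
  obtain ⟨C, hC⟩ := W.S_bdd (Set.Icc 0 R) isCompact_Icc
  refine continuousOn_clm_apply_of_dense hC W.test_dense ?_ f
  rintro f ⟨g, hg, hfg⟩
  have hK : IsCompact (tsupport g + Set.Icc 0 R) := hg.2.1.isCompact.add isCompact_Icc
  refine W.continuousOn_of_contDiff_uncurry (u := fun a x => g (x - a))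
    (hg.1.comp (contDiff_snd.sub contDiff_fst)) hK ?_ (fun a ha => ?_)
    fun a ha => W.toFun_S_apply_of_isTestPlus hg hfg ha.1
  · rintro _ ⟨x, hx, a, ha, rfl⟩
    exact add_pos_of_pos_of_nonneg (Set.mem_Ioi.1 (hg.2.2 hx)) ha.1
  · refine closure_minimal (fun x hx => ?_) hK.isClosed
    exact ⟨x - a, subset_tsupport g hx, a, ha, sub_add_cancel x a⟩

theorem continuous_Mod_apply (f : W.E) : Continuous fun a => W.Mod a f := by
  obtain ⟨C, hC⟩ := W.Mod_bdd
  rw [← continuousOn_univ]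
  refine continuousOn_clm_apply_of_dense (fun a _ => hC a) W.test_dense ?_ f
  rintro f ⟨g, hg, hfg⟩
  exact W.continuousOn_of_contDiff_uncurry (contDiff_uncurry_modFun hg.1) hg.2.1 hg.2.2
    (fun a _ => tsupport_modFun_subset a g) fun a _ => W.toFun_Mod_apply hfg a

end StrongContinuity

section Integrals

variable {W}

theorem exists_clm_apply_eq_integral_smul_toFun {h : ℝ → ℝ} (hc : Continuous h)
    (hs : HasCompactSupport h) :
    ∃ L : W.E →L[ℂ] ℂ, ∀ f, L f = ∫ x, h x • W.toFun f x := by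
  obtain ⟨M, hM⟩ := hc.bounded_above_of_compact_support hs
  obtain ⟨C, -, hC⟩ := W.incl_cont (tsupport h) hs
  refine exists_clm_apply_eq_integral (C := M * C)
    (L := fun x => h x • (LinearMap.proj x ∘ₗ W.toFun))
    (fun f => (W.locInt f).integrable_smul_left_of_hasCompactSupport hc hs) fun f => ?_
  calc ‖∫ x, h x • W.toFun f x‖ ≤ M * ∫ x in tsupport h, ‖W.toFun f x‖ :=
        norm_integral_smul_le_mul_setIntegral_norm hM ((W.locInt f).integrableOn_isCompact hs)
    _ ≤ M * (C * ‖f‖) := mul_le_mul_of_nonneg_left (hC f) ((norm_nonneg _).trans (hM 0))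
    _ = M * C * ‖f‖ := (mul_assoc M C ‖f‖).symm

-- Both sides are locally integrable in `x`, and pairing with a smooth compactly supported `h` is
-- continuous on `E`, hence commutes with the Bochner integral.
theorem toFun_integral_ae_eq {α : Type*} [MeasurableSpace α] {μ : Measure α} [SFinite μ]
    {F : α → W.E} (hF : Integrable F μ) {u : α → ℝ → ℂ}
    (hFu : ∀ᵐ a ∂μ, W.toFun (F a) =ᵐ[volume.restrict (Set.Ici 0)] u a)
    (hu : ∀ K : Set ℝ, IsCompact K →
      Integrable (fun p : ℝ × α => u p.2 p.1) ((volume.restrict K).prod μ)) :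
    W.toFun (∫ a, F a ∂μ) =ᵐ[volume.restrict (Set.Ici 0)] fun x => ∫ a, u a x ∂μ := by
  have hloc : LocallyIntegrable (fun x => ∫ a, u a x ∂μ) :=
    locallyIntegrable_iff.2 fun K hK => (hu K hK).integral_prod_left
  suffices h : ∀ᵐ x, x ∈ Set.Ioi (0 : ℝ) → W.toFun (∫ a, F a ∂μ) x - ∫ a, u a x ∂μ = 0 by
    rw [← Measure.restrict_congr_set Ioi_ae_eq_Ici]
    filter_upwards [(ae_restrict_iff' measurableSet_Ioi).2 h] with x hx using sub_eq_zero.1 hx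
  refine isOpen_Ioi.ae_eq_zero_of_integral_contDiff_smul_eq_zero
    (((W.locInt _).sub hloc).locallyIntegrableOn _) fun h hsmooth hs hpos => ?_
  have hc : Continuous h := hsmooth.continuous
  obtain ⟨L, hL⟩ := exists_clm_apply_eq_integral_smul_toFun (W := W) hc hs
  have hLu : ∀ᵐ a ∂μ, L (F a) = ∫ x, h x • u a x := by
    filter_upwards [hFu] with a ha
    rw [hL]
    refine integral_congr_ae ?_
    filter_upwards [(ae_restrict_iff' measurableSet_Ici).1 ha] with x hx
    by_cases hxs : x ∈ tsupport h
    · rw [hx (Set.mem_Ici_of_Ioi (hpos hxs))]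
    · rw [image_eq_zero_of_notMem_tsupport hxs, zero_smul, zero_smul]
  simp only [smul_sub]
  rw [integral_sub ((W.locInt _).integrable_smul_left_of_hasCompactSupport hc hs)
    (hloc.integrable_smul_left_of_hasCompactSupport hc hs), sub_eq_zero]
  calc ∫ x, h x • W.toFun (∫ a, F a ∂μ) x = ∫ a, L (F a) ∂μ := by
        rw [← hL, L.integral_comp_comm hF]
    _ = ∫ a, (∫ x, h x • u a x) ∂μ := integral_congr_ae hLu
    _ = ∫ x, h x • ∫ a, u a x ∂μ :=
        (integral_smul_integral_comm_of_hasCompactSupport hc hs (hu _ hs)).symm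

end Integrals

section TranslationMean

/-- The mean `f ↦ ∫ y, θ y • S_y f` of the translations, weighted by a function `θ` on `ℝ⁺`; for a
test function `θ` on `(0, ∞)` this is the operator `T_θ`. -/
def translationMean (W : WHSpace) (θ : ℝ → ℂ) : W.E →L[ℂ] W.E :=
  strongIntegral volume fun y => θ y • W.S y

theorem isStronglyDominated_smul_S {θ : ℝ → ℂ} {R C : ℝ} (hθ : Integrable θ)
    (hR : support θ ⊆ Set.Icc 0 R) (hC : ∀ y ∈ Set.Icc 0 R, ‖W.S y‖ ≤ C) :
    IsStronglyDominated volume (fun y => θ y • W.S y) fun y => ‖θ y‖ * C where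
  aestronglyMeasurable f := by
    have hS : AEStronglyMeasurable ((Set.Icc 0 R).indicator fun y => W.S y f) volume :=
      (aestronglyMeasurable_indicator_iff measurableSet_Icc).2
        ((W.continuousOn_S_apply R f).aestronglyMeasurable measurableSet_Icc)
    refine (hθ.aestronglyMeasurable.smul hS).congr (ae_of_all _ fun y => ?_)
    by_cases hy : y ∈ Set.Icc 0 R
    · simp only [Pi.smul_apply', Set.indicator_of_mem hy, smul_apply]
    · simp only [Pi.smul_apply', notMem_support.1 fun h => hy (hR h), zero_smul, zero_apply]
  integrable_bound := hθ.norm.mul_const C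
  norm_le y := by
    rw [norm_smul]
    by_cases hy : y ∈ Set.Icc 0 R
    · exact mul_le_mul_of_nonneg_left (hC y hy) (norm_nonneg _)
    · simp only [notMem_support.1 fun h => hy (hR h), norm_zero, zero_mul, le_refl]

theorem norm_translationMean_le {θ : ℝ → ℂ} {R C : ℝ} (hθ : Integrable θ)
    (hR : support θ ⊆ Set.Icc 0 R) (hC : ∀ y ∈ Set.Icc 0 R, ‖W.S y‖ ≤ C) :
    ‖W.translationMean θ‖ ≤ (∫ y, ‖θ y‖) * C := by
  rw [← integral_mul_const]
  exact (W.isStronglyDominated_smul_S hθ hR hC).norm_strongIntegral_le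

theorem exists_isStronglyDominated_smul_S {θ : ℝ → ℂ} (hθ : IsTestPlus θ) :
    ∃ b, IsStronglyDominated volume (fun y => θ y • W.S y) b := by
  obtain ⟨R, hR⟩ := hθ.exists_support_subset_Icc
  obtain ⟨C, hC⟩ := W.S_bdd (Set.Icc 0 R) isCompact_Icc
  exact ⟨_, W.isStronglyDominated_smul_S hθ.integrable hR hC⟩

theorem integrable_smul_S_apply {θ : ℝ → ℂ} (hθ : IsTestPlus θ) (f : W.E) :
    Integrable fun y => θ y • W.S y f :=
  (W.exists_isStronglyDominated_smul_S hθ).choose_spec.integrable_apply f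

theorem translationMean_apply {θ : ℝ → ℂ} (hθ : IsTestPlus θ) (f : W.E) :
    W.translationMean θ f = ∫ y, θ y • W.S y f :=
  (W.exists_isStronglyDominated_smul_S hθ).choose_spec.strongIntegral_apply f

variable {W}

theorem toFun_translationMean_apply {θ g : ℝ → ℂ} (hθ : IsTestPlus θ) (hg : IsTestPlus g) {f : W.E}
    (hfg : W.toFun f =ᵐ[volume] g) :
    W.toFun (W.translationMean θ f) =ᵐ[volume] θ ⋆[mul ℝ ℂ] g := by
  have hS : ∀ᵐ y, W.toFun (θ y • W.S y f) =ᵐ[volume.restrict (Set.Ici 0)]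
      fun x => θ y * g (x - y) := by
    refine ae_of_all _ fun y => ae_restrict_of_ae ?_
    rcases le_or_gt 0 y with hy | hy
    · filter_upwards [W.toFun_S_apply_of_isTestPlus hg hfg hy] with x hx
      rw [map_smul, Pi.smul_apply, hx, smul_eq_mul]
    · simp only [hθ.eq_zero_of_nonpos hy.le, zero_smul, map_zero, zero_mul]
      exact ae_of_all _ fun _ => rfl
  have hpos := toFun_integral_ae_eq (W.integrable_smul_S_apply hθ f) hS fun K hK =>
    integrable_convolution_integrand_restrict (mul ℝ ℂ) hθ.integrable hθ.2.1
      hg.1.continuous.locallyIntegrable hK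
  rw [← W.translationMean_apply hθ] at hpos
  filter_upwards [(ae_restrict_iff' measurableSet_Ici).1 hpos,
    W.supp (W.translationMean θ f)] with x hx hneg
  rcases le_or_gt 0 x with h0 | h0
  · exact hx h0
  · rw [hneg h0, (hθ.convolution hg).eq_zero_of_nonpos h0.le]

theorem translationMean_apply_comm {θ g : ℝ → ℂ} (hθ : IsTestPlus θ) (hg : IsTestPlus g)
    {t f : W.E} (ht : W.toFun t =ᵐ[volume] θ) (hf : W.toFun f =ᵐ[volume] g) :
    W.translationMean θ f = W.translationMean g t := by
  apply W.inj
  filter_upwards [toFun_translationMean_apply hθ hg hf, toFun_translationMean_apply hg hθ ht]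
    with x hx hx'
  rw [hx, hx', convolution_mul_comm]

end TranslationMean

end WHSpace

section Mollifier

/-- A smooth weight of mass one on `(0, ε]`; the operators `T_θ` form an approximate identity on
`E` as `ε → 0`. -/
structure IsMollifier (θ : ℝ → ℂ) (ε : ℝ) : Prop where
  isTestPlus : IsTestPlus θ
  integral_norm_eq_one : ∫ y, ‖θ y‖ = 1
  integral_eq_one : ∫ y, θ y = 1
  support_subset : support θ ⊆ Set.Icc 0 ε

theorem exists_isMollifier {ε : ℝ} (hε : 0 < ε) : ∃ θ, IsMollifier θ ε := by
  let b : ContDiffBump (ε / 2) := ⟨ε / 8, ε / 4, by positivity, by linarith⟩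
  let θ : ℝ → ℂ := fun x => (b.normed volume x : ℂ)
  have hts : tsupport θ ⊆ Set.Icc (ε / 2 - ε / 4) (ε / 2 + ε / 4) := by
    rw [← Real.closedBall_eq_Icc, ← b.tsupport_normed_eq (μ := volume)]
    exact closure_mono fun x hx h => hx (by simp only [θ, h, ofReal_zero])
  refine ⟨θ, ⟨ofRealCLM.contDiff.comp b.contDiff_normed,
    isCompact_Icc.of_isClosed_subset (isClosed_tsupport θ) hts,
    fun x hx => lt_of_lt_of_le (by linarith) (hts hx).1⟩, ?_, ?_, ?_⟩
  · simp only [θ, Complex.norm_real, Real.norm_of_nonneg (b.nonneg_normed _), b.integral_normed]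
  · rw [integral_complex_ofReal, b.integral_normed, ofReal_one]
  · exact (subset_tsupport θ).trans
      (hts.trans (Set.Icc_subset_Icc (by linarith) (by linarith)))

namespace IsMollifier

variable {W : WHSpace} {θ : ℝ → ℂ} {ε : ℝ}

theorem norm_translationMean_le (hθ : IsMollifier θ ε) {C : ℝ}
    (hC : ∀ y ∈ Set.Icc 0 ε, ‖W.S y‖ ≤ C) : ‖W.translationMean θ‖ ≤ C := by
  simpa only [hθ.integral_norm_eq_one, one_mul] using
    W.norm_translationMean_le hθ.isTestPlus.integrable hθ.support_subset hC

theorem norm_translationMean_apply_sub_le (hθ : IsMollifier θ ε) {δ : ℝ} {f : W.E}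
    (h : ∀ y ∈ Set.Icc 0 ε, ‖W.S y f - f‖ ≤ δ) : ‖W.translationMean θ f - f‖ ≤ δ := by
  have hint : Integrable θ := hθ.isTestPlus.integrable
  have hle (y : ℝ) : ‖θ y • (W.S y f - f)‖ ≤ ‖θ y‖ * δ := by
    rw [norm_smul]
    by_cases hy : y ∈ Set.Icc 0 ε
    · exact mul_le_mul_of_nonneg_left (h y hy) (norm_nonneg _)
    · simp only [notMem_support.1 fun hy' => hy (hθ.support_subset hy'), norm_zero, zero_mul,
        le_refl]
  calc ‖W.translationMean θ f - f‖ = ‖∫ y, θ y • (W.S y f - f)‖ := by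
        simp only [smul_sub]
        rw [integral_sub (W.integrable_smul_S_apply hθ.isTestPlus f) (hint.smul_const f),
          integral_smul_const, hθ.integral_eq_one, one_smul, W.translationMean_apply hθ.isTestPlus]
    _ ≤ ∫ y, ‖θ y‖ * δ :=
        norm_integral_le_of_norm_le (hint.norm.mul_const δ) (ae_of_all _ hle)
    _ = δ := by rw [integral_mul_const, hθ.integral_norm_eq_one, one_mul]

theorem tendsto_translationMean_apply {ι : Type*} {l : Filter ι} {θ : ι → ℝ → ℂ} {ε : ι → ℝ}
    (hθ : ∀ i, IsMollifier (θ i) (ε i)) (hε : Tendsto ε l (𝓝 0)) (f : W.E) :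
    Tendsto (fun i => W.translationMean (θ i) f) l (𝓝 f) := by
  refine Metric.tendsto_nhds.2 fun δ hδ => ?_
  obtain ⟨η, hη, hηf⟩ := Metric.continuousWithinAt_iff.1
    (W.continuousOn_S_apply 1 f 0 (Set.left_mem_Icc.2 zero_le_one)) (δ / 2) (half_pos hδ)
  filter_upwards [hε.eventually_lt_const (lt_min hη one_pos)] with i hi
  rw [dist_eq_norm]
  refine ((hθ i).norm_translationMean_apply_sub_le fun y hy => ?_).trans_lt (half_lt_self hδ)
  have hy' : y < min η 1 := hy.2.trans_lt hi
  have hdist := hηf ⟨hy.1, (hy'.trans_le (min_le_right _ _)).le⟩ (by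
    rw [Real.dist_0_eq_abs, abs_of_nonneg hy.1]
    exact hy'.trans_le (min_le_left _ _))
  rw [W.S_zero_apply, dist_eq_norm] at hdist
  exact hdist.le

end IsMollifier

end Mollifier

namespace IsWienerHopf

variable {W : WHSpace} {T : W.E →L[ℂ] W.E}

theorem toFun_apply_S_ae_eq (hT : IsWienerHopf W T) (t : W.E) {b c : ℝ} (hb : 0 ≤ b)
    (hbc : b ≤ c) :
    ∀ᵐ x, x ∈ Set.Ici (-b) → W.toFun (T (W.S b t)) (x + b) = W.toFun (T (W.S c t)) (x + c) := by
  have hcomm : W.S (-(c - b)) (T (W.S c t)) = T (W.S b t) := by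
    simpa only [ContinuousLinearMap.comp_apply, W.S_apply_S _ hb, sub_add_cancel] using
      congr($(hT (c - b) (sub_nonneg.2 hbc)) (W.S b t))
  filter_upwards [(eventually_add_right_iff volume b).2
    (W.S_spec (-(c - b)) (T (W.S c t)))] with x hx hxb
  rw [← hcomm, hx, transFun, if_pos (neg_le_iff_add_nonneg.1 hxb)]
  ring_nf

theorem exists_kernel (hT : IsWienerHopf W T) (t : W.E) :
    ∃ ψ : ℝ → ℂ, LocallyIntegrable ψ ∧ ∀ b, 0 ≤ b →
      W.toFun (T (W.S b t)) =ᵐ[volume.restrict (Set.Ici 0)] fun x => ψ (x - b) := by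
  obtain ⟨ψ, hψ⟩ := exists_forall_ae_eq_of_compatible (μ := volume)
    (s := fun n : ℕ => Set.Ici (-(n : ℝ))) (u := fun n x => W.toFun (T (W.S n t)) (x + n))
    fun m n hmn => hT.toFun_apply_S_ae_eq t m.cast_nonneg (Nat.cast_le.2 hmn)
  refine ⟨ψ, locallyIntegrable_iff.2 fun K hK => ?_, fun b hb => ?_⟩
  · obtain ⟨R, hR⟩ := hK.bddBelow
    obtain ⟨n, hn⟩ := exists_nat_ge (-R)
    have hshift : IntegrableOn (fun x => W.toFun (T (W.S n t)) (x + n)) K :=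
      ((measurePreserving_add_right volume (n : ℝ)).integrableOn_image
        (measurableEmbedding_addRight (n : ℝ))).1
        ((W.locInt _).integrableOn_isCompact (hK.image (continuous_add_const (n : ℝ))))
    refine hshift.congr_fun_ae ?_
    filter_upwards [ae_restrict_of_ae (hψ n), ae_restrict_mem hK.measurableSet] with x hx hxK
    exact (hx ((neg_le.1 hn).trans (hR hxK))).symm
  · obtain ⟨n, hn⟩ := exists_nat_ge b
    refine (ae_restrict_iff' measurableSet_Ici).2 ?_
    filter_upwards [(eventually_sub_right_iff volume b).2 (hT.toFun_apply_S_ae_eq t hb hn),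
      (eventually_sub_right_iff volume b).2 (hψ n)] with x hbn hx hx0
    have hxb : -b ≤ x - b := by linarith [Set.mem_Ici.1 hx0]
    rw [hx ((neg_le_neg hn).trans hxb), ← hbn hxb, sub_add_cancel]

theorem exists_isConvOp_comp_translationMean (hT : IsWienerHopf W T) {θ : ℝ → ℂ}
    (hθ : IsTestPlus θ) :
    ∃ ψ : ℝ → ℂ, LocallyIntegrable ψ ∧ IsConvOp W ψ (T ∘L W.translationMean θ) := by
  obtain ⟨t, ht⟩ := W.test_mem θ hθ
  obtain ⟨ψ, hψ, hψT⟩ := hT.exists_kernel t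
  refine ⟨ψ, hψ, fun f g hg hfg => ?_⟩
  have hint := W.integrable_smul_S_apply hg t
  have hTf : (T ∘L W.translationMean θ) f = ∫ y, T (g y • W.S y t) := by
    rw [ContinuousLinearMap.comp_apply, WHSpace.translationMean_apply_comm hθ hg ht hfg,
      W.translationMean_apply hg, T.integral_comp_comm hint]
  have hTS : ∀ᵐ y, W.toFun (T (g y • W.S y t)) =ᵐ[volume.restrict (Set.Ici 0)]
      fun x => g y * ψ (x - y) := by
    refine ae_of_all _ fun y => ?_
    rcases le_or_gt 0 y with hy | hy
    · filter_upwards [hψT y hy] with x hx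
      rw [map_smul, map_smul, Pi.smul_apply, hx, smul_eq_mul]
    · simp only [hg.eq_zero_of_nonpos hy.le, zero_smul, map_zero, zero_mul]
      rfl
  rw [hTf]
  filter_upwards [WHSpace.toFun_integral_ae_eq (T.integrable_comp hint) hTS fun K hK =>
    integrable_convolution_integrand_restrict (mul ℝ ℂ) hg.integrable hg.2.1 hψ hK] with x hx
  exact hx.trans (congrFun (convolution_mul_comm g ψ) x)

end IsWienerHopf

theorem IsConvOp.comp_translationMean {W : WHSpace} {ψ θ : ℝ → ℂ} {B : W.E →L[ℂ] W.E}
    (hB : IsConvOp W ψ B) (hψ : LocallyIntegrable ψ) (hθ : IsTestPlus θ) :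
    IsConvOp W (ψ ⋆[mul ℝ ℂ] θ) (B ∘L W.translationMean θ) := by
  intro f g hg hfg
  filter_upwards [hB _ _ (hθ.convolution hg) (WHSpace.toFun_translationMean_apply hθ hg hfg)]
    with x hx
  exact hx.trans (congrFun (convolution_mul_assoc hψ hθ.1.continuous hθ.2.1 hg.1.continuous
    hg.2.1) x).symm

section FourierInversion

variable {V : Type*} [NormedAddCommGroup V] [InnerProductSpace ℝ V] [FiniteDimensional ℝ V]
  [MeasurableSpace V] [BorelSpace V]

theorem integral_fourierInv_smul_smul_eq {F : Type*} [NormedAddCommGroup F] [NormedSpace ℂ F]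
    [CompleteSpace F] {k : V → ℂ} {h : V → F} (hk : Integrable k) (hh : Integrable h) (r : ℝ) :
    ∫ y, 𝓕⁻ k (r • y) • h y = ∫ a, k a • 𝓕⁻ h (r • a) := by
  simpa only [VectorFourier.fourierIntegral, Real.fourierInv_eq, LinearMap.flip_apply,
    LinearMap.smul_apply, innerₗ_apply_apply, neg_smul, LinearMap.neg_apply, neg_neg, smul_eq_mul,
    inner_smul_right, real_inner_comm] using
    VectorFourier.integral_fourierIntegral_smul_eq_flip (L := (-r) • innerₗ V)
      Real.continuous_fourierChar ((continuous_inner (𝕜 := ℝ)).const_smul (-r)) hk hh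

variable (V) in
theorem exists_schwartzMap_hasCompactSupport_fourierInv :
    ∃ k : 𝓢(V, ℂ), HasCompactSupport (𝓕⁻ (k : V → ℂ)) ∧ ∫ a, k a = 1 := by
  let b : ContDiffBump (0 : V) := default
  have hb : HasCompactSupport fun y => (b y : ℂ) := b.hasCompactSupport.comp_left ofReal_zero
  let χ : 𝓢(V, ℂ) := hb.toSchwartzMap (ofRealCLM.contDiff.comp b.contDiff)
  have hχ : 𝓕⁻ ((𝓕 χ : 𝓢(V, ℂ)) : V → ℂ) = fun y => (b y : ℂ) := by
    rw [← SchwartzMap.fourierInv_coe, FourierTransform.fourierInv_fourier_eq]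
    rfl
  refine ⟨𝓕 χ, hχ ▸ hb, ?_⟩
  calc ∫ a, (𝓕 χ : 𝓢(V, ℂ)) a = 𝓕⁻ ((𝓕 χ : 𝓢(V, ℂ)) : V → ℂ) 0 := by
        simp only [Real.fourierInv_eq, inner_zero_right, AddChar.map_zero_eq_one, one_smul]
    _ = 1 := by
        rw [hχ]
        simp only [b.one_of_mem_closedBall (Metric.mem_closedBall_self b.rIn_pos.le), ofReal_one]

end FourierInversion

section ModulatedConvolution

theorem norm_modFun_convolution_apply_le (a : ℝ) (φ g : ℝ → ℂ) (x : ℝ) :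
    ‖(modFun a φ ⋆[mul ℝ ℂ] g) x‖ ≤
      ((fun y => ‖φ y‖) ⋆[mul ℝ ℝ] fun y => ‖g y‖) x := by
  refine (norm_integral_le_integral_norm _).trans_eq (integral_congr_ae (ae_of_all _ fun y => ?_))
  simp only [ContinuousLinearMap.mul_apply', norm_mul, norm_modFun_apply]

theorem integrable_mul_modFun_convolution {k φ g : ℝ → ℂ} (hk : Integrable k) (hφ : Continuous φ)
    (hg : Continuous g) (hgs : HasCompactSupport g) (r : ℝ) {K : Set ℝ} (hK : IsCompact K) :
    Integrable (fun p : ℝ × ℝ => k p.2 * (modFun (2 * π * r * p.2) φ ⋆[mul ℝ ℂ] g) p.1)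
      ((volume.restrict K).prod volume) := by
  have hbound : Continuous ((fun y => ‖φ y‖) ⋆[mul ℝ ℝ] fun y => ‖g y‖) :=
    hgs.norm.continuous_convolution_right _ hφ.norm.locallyIntegrable hg.norm
  have hmeas : StronglyMeasurable fun p : ℝ × ℝ =>
      (modFun (2 * π * r * p.2) φ ⋆[mul ℝ ℂ] g) p.1 := by
    refine StronglyMeasurable.integral_prod_right (Continuous.stronglyMeasurable ?_)
    simp only [modFun, ContinuousLinearMap.mul_apply']
    fun_prop
  have hdom := (hbound.continuousOn.integrableOn_compact (μ := volume) hK).integrable.mul_prod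
    hk.norm
  refine hdom.mono' (hk.aestronglyMeasurable.comp_snd.mul hmeas.aestronglyMeasurable)
    (ae_of_all _ fun p => ?_)
  rw [norm_mul, mul_comm]
  exact mul_le_mul_of_nonneg_right (norm_modFun_convolution_apply_le _ _ _ _) (norm_nonneg _)

theorem integral_mul_modFun_convolution {k φ g : ℝ → ℂ} (hk : Integrable k) (hφ : Continuous φ)
    (hg : Continuous g) (hgs : HasCompactSupport g) (r x : ℝ) :
    ∫ a, k a * (modFun (2 * π * r * a) φ ⋆[mul ℝ ℂ] g) x =
      ((fun y => 𝓕⁻ k (r * y) * φ y) ⋆[mul ℝ ℂ] g) x := by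
  have hint : Integrable fun y => φ y * g (x - y) :=
    (hgs.convolutionExists_right (mul ℝ ℂ) hφ.locallyIntegrable hg x).integrable
  have hfourier (a : ℝ) : (modFun (2 * π * r * a) φ ⋆[mul ℝ ℂ] g) x =
      𝓕⁻ (fun y => φ y * g (x - y)) (r • a) := by
    rw [Real.fourierInv_eq', convolution_def]
    refine integral_congr_ae (ae_of_all _ fun y => ?_)
    simp only [modFun, ContinuousLinearMap.mul_apply', smul_eq_mul, RCLike.inner_apply,
      conj_trivial]
    push_cast
    ring_nf
  simp only [hfourier, ← smul_eq_mul (k _), ← integral_fourierInv_smul_smul_eq hk hint r]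
  simp only [smul_eq_mul, convolution_def, ContinuousLinearMap.mul_apply', mul_assoc]

end ModulatedConvolution

namespace WHSpace

variable (W : WHSpace)

section ModulationMean

/-- The conjugate `Γ_a B Γ_{-a}` of `B` by a modulation. -/
def modConj (a : ℝ) (B : W.E →L[ℂ] W.E) : W.E →L[ℂ] W.E :=
  W.Mod a ∘L B ∘L W.Mod (-a)

theorem modConj_zero (B : W.E →L[ℂ] W.E) : W.modConj 0 B = B := by
  ext f
  simp only [modConj, neg_zero, ContinuousLinearMap.comp_apply, Mod_zero_apply]

theorem norm_modConj_le {C : ℝ} (hC : ∀ a, ‖W.Mod a‖ ≤ C) (a : ℝ) (B : W.E →L[ℂ] W.E) :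
    ‖W.modConj a B‖ ≤ C * ‖B‖ * C := by
  have hC0 : 0 ≤ C := (norm_nonneg _).trans (hC 0)
  calc ‖W.modConj a B‖ ≤ ‖W.Mod a‖ * (‖B‖ * ‖W.Mod (-a)‖) :=
        (opNorm_comp_le _ _).trans (by gcongr; exact opNorm_comp_le _ _)
    _ ≤ C * (‖B‖ * C) := by gcongr <;> exact hC _
    _ = C * ‖B‖ * C := (mul_assoc _ _ _).symm

theorem tendsto_modConj_apply {ι : Type*} {l : Filter ι} {s : ι → ℝ} {a : ℝ}
    (hs : Tendsto s l (𝓝 a)) {B : ι → W.E →L[ℂ] W.E} {D : ℝ} (hB : ∀ i, ‖B i‖ ≤ D)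
    {T : W.E →L[ℂ] W.E} (hT : ∀ f, Tendsto (fun i => B i f) l (𝓝 (T f))) (f : W.E) :
    Tendsto (fun i => W.modConj (s i) (B i) f) l (𝓝 (W.modConj a T f)) := by
  obtain ⟨C, hC⟩ := W.Mod_bdd
  have hMod (f : W.E) : Tendsto (fun i => W.Mod (-s i) f) l (𝓝 (W.Mod (-a) f)) :=
    ((W.continuous_Mod_apply f).tendsto (-a)).comp hs.neg
  exact tendsto_clm_apply_of_tendsto (fun i => hC (s i))
    (tendsto_clm_apply_of_tendsto hB (hMod f) (hT _))
    (((W.continuous_Mod_apply _).tendsto a).comp hs)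

theorem continuous_modConj_apply (B : W.E →L[ℂ] W.E) (f : W.E) :
    Continuous fun a => W.modConj a B f :=
  continuous_iff_continuousAt.2 fun _ => W.tendsto_modConj_apply (D := ‖B‖) tendsto_id
    (fun _ => le_rfl) (fun _ => tendsto_const_nhds) f

/-- The mean of the conjugates `Γ_{2πra} B Γ_{-2πra}` over `a ∈ ℝ` with weight `k`; it multiplies
the symbol of `B` by `𝓕⁻ k (r ·)`, with `2π` coming from the normalization of `𝓕⁻`. -/
def modulationMean (k : ℝ → ℂ) (r : ℝ) (B : W.E →L[ℂ] W.E) : W.E →L[ℂ] W.E :=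
  strongIntegral volume fun a => k a • W.modConj (2 * π * r * a) B

theorem isStronglyDominated_smul_modConj {k : ℝ → ℂ} (hk : Integrable k) {C : ℝ}
    (hC : ∀ a, ‖W.Mod a‖ ≤ C) (r : ℝ) (B : W.E →L[ℂ] W.E) :
    IsStronglyDominated volume (fun a => k a • W.modConj (2 * π * r * a) B)
      fun a => ‖k a‖ * (C * ‖B‖ * C) where
  aestronglyMeasurable f := hk.aestronglyMeasurable.smul
    ((W.continuous_modConj_apply B f).comp (continuous_const_mul _)).aestronglyMeasurable
  integrable_bound := hk.norm.mul_const _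
  norm_le a := by
    rw [norm_smul]
    exact mul_le_mul_of_nonneg_left (W.norm_modConj_le hC _ B) (norm_nonneg _)

theorem norm_modulationMean_le {k : ℝ → ℂ} (hk : Integrable k) {C : ℝ} (hC : ∀ a, ‖W.Mod a‖ ≤ C)
    (r : ℝ) (B : W.E →L[ℂ] W.E) :
    ‖W.modulationMean k r B‖ ≤ (∫ a, ‖k a‖) * (C * ‖B‖ * C) := by
  rw [← integral_mul_const]
  exact (W.isStronglyDominated_smul_modConj hk hC r B).norm_strongIntegral_le

theorem integrable_smul_modConj_apply {k : ℝ → ℂ} (hk : Integrable k) (r : ℝ)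
    (B : W.E →L[ℂ] W.E) (f : W.E) :
    Integrable fun a => k a • W.modConj (2 * π * r * a) B f :=
  (W.isStronglyDominated_smul_modConj hk W.Mod_bdd.choose_spec r B).integrable_apply f

theorem modulationMean_apply {k : ℝ → ℂ} (hk : Integrable k) (r : ℝ) (B : W.E →L[ℂ] W.E)
    (f : W.E) : W.modulationMean k r B f = ∫ a, k a • W.modConj (2 * π * r * a) B f :=
  (W.isStronglyDominated_smul_modConj hk W.Mod_bdd.choose_spec r B).strongIntegral_apply f

theorem tendsto_modulationMean_apply {k : ℝ → ℂ} (hk : Integrable k) {r : ℕ → ℝ}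
    (hr : Tendsto r atTop (𝓝 0)) {B : ℕ → W.E →L[ℂ] W.E} {D : ℝ} (hB : ∀ n, ‖B n‖ ≤ D)
    {T : W.E →L[ℂ] W.E} (hT : ∀ f, Tendsto (fun n => B n f) atTop (𝓝 (T f))) (f : W.E) :
    Tendsto (fun n => W.modulationMean k (r n) (B n) f) atTop (𝓝 ((∫ a, k a) • T f)) := by
  obtain ⟨C, hC⟩ := W.Mod_bdd
  have hC0 : 0 ≤ C := (norm_nonneg _).trans (hC 0)
  simp only [W.modulationMean_apply hk, ← integral_smul_const]
  refine tendsto_integral_of_dominated_convergence (fun a => ‖k a‖ * (C * D * C * ‖f‖))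
    (fun n => (W.integrable_smul_modConj_apply hk (r n) (B n) f).aestronglyMeasurable)
    (hk.norm.mul_const _) (fun n => ae_of_all _ fun a => ?_) (ae_of_all _ fun a => ?_)
  · rw [norm_smul]
    gcongr
    refine (W.modConj _ (B n)).le_of_opNorm_le ((W.norm_modConj_le hC _ _).trans ?_) f
    gcongr
    exact hB n
  · have hs : Tendsto (fun n => 2 * π * r n * a) atTop (𝓝 0) := by
      simpa only [mul_zero, zero_mul] using (hr.const_mul (2 * π)).mul_const a
    simpa only [modConj_zero] using (W.tendsto_modConj_apply hs hB hT f).const_smul (k a)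

end ModulationMean

end WHSpace

namespace IsConvOp

variable {W : WHSpace} {φ : ℝ → ℂ} {B : W.E →L[ℂ] W.E}

protected theorem modConj (hB : IsConvOp W φ B) (a : ℝ) :
    IsConvOp W (modFun a φ) (W.modConj a B) := by
  intro f g hg hfg
  have hcancel : modFun a (modFun (-a) g) = g := by
    ext x
    simp only [modFun, ofReal_neg, mul_neg, neg_mul, ← mul_assoc, ← Complex.exp_add,
      add_neg_cancel, Complex.exp_zero, one_mul]
  filter_upwards [hB _ _ (hg.modFun (-a)) (W.toFun_Mod_apply hfg (-a)),
    ae_restrict_of_ae (W.Mod_spec a (B (W.Mod (-a) f)))] with x hx hMod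
  calc W.toFun (W.modConj a B f) x = modFun a (φ ⋆[mul ℝ ℂ] modFun (-a) g) x :=
        hMod.trans (congrArg _ hx)
    _ = ∫ y, modFun a φ y * g (x - y) := by
        rw [modFun_convolution, hcancel]
        rfl

protected theorem modulationMean (hB : IsConvOp W φ B) (hφ : Continuous φ) {k : ℝ → ℂ}
    (hk : Integrable k) (r : ℝ) :
    IsConvOp W (fun y => 𝓕⁻ k (r * y) * φ y) (W.modulationMean k r B) := by
  intro f g hg hfg
  have hcg : Continuous g := hg.1.continuous
  have hconj : ∀ᵐ a, W.toFun (k a • W.modConj (2 * π * r * a) B f)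
      =ᵐ[volume.restrict (Set.Ici 0)]
        fun x => k a * (modFun (2 * π * r * a) φ ⋆[mul ℝ ℂ] g) x := by
    refine ae_of_all _ fun a => ?_
    filter_upwards [hB.modConj (2 * π * r * a) f g hg hfg] with x hx
    rw [map_smul, Pi.smul_apply, hx, smul_eq_mul]
    rfl
  rw [W.modulationMean_apply hk]
  filter_upwards [WHSpace.toFun_integral_ae_eq (W.integrable_smul_modConj_apply hk r B f) hconj
    fun K hK => integrable_mul_modFun_convolution hk hφ hcg hg.2.1 r hK] with x hx
  exact hx.trans (integral_mul_modFun_convolution hk hφ hcg hg.2.1 r x)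

end IsConvOp

section Approximation

theorem IsWienerHopf.exists_contDiff_isConvOp_tendsto (W : WHSpace) :
    ∃ C : ℝ, ∀ T : W.E →L[ℂ] W.E, IsWienerHopf W T →
      ∃ (φ : ℕ → ℝ → ℂ) (B : ℕ → W.E →L[ℂ] W.E),
        (∀ n, ContDiff ℝ ∞ (φ n) ∧ IsConvOp W (φ n) (B n)) ∧
        (∀ f, Tendsto (fun n => B n f) atTop (𝓝 (T f))) ∧ ∀ n, ‖B n‖ ≤ C * ‖T‖ := by
  obtain ⟨C, hC⟩ := W.S_bdd (Set.Icc 0 1) isCompact_Icc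
  choose θ hθ using fun n : ℕ => exists_isMollifier (ε := 1 / (n + 1)) Nat.one_div_pos_of_nat
  let M (n : ℕ) : W.E →L[ℂ] W.E := W.translationMean (θ n)
  have hM (n : ℕ) : ‖M n‖ ≤ C := (hθ n).norm_translationMean_le fun y hy =>
    hC y ⟨hy.1, hy.2.trans (div_le_one_of_le₀ (by simp) (by positivity))⟩
  have hMf (f : W.E) : Tendsto (fun n => M n f) atTop (𝓝 f) :=
    IsMollifier.tendsto_translationMean_apply hθ tendsto_one_div_add_atTop_nhds_zero_nat f
  refine ⟨C * C, fun T hT => ?_⟩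
  choose ψ hψ hψT using fun n => hT.exists_isConvOp_comp_translationMean (hθ n).isTestPlus
  refine ⟨fun n => ψ n ⋆[mul ℝ ℂ] θ n, fun n => (T ∘L M n) ∘L M n, fun n => ⟨?_, ?_⟩,
    fun f => ?_, fun n => ?_⟩
  · exact (hθ n).isTestPlus.2.1.contDiff_convolution_right _ (hψ n) (hθ n).isTestPlus.1
  · exact (hψT n).comp_translationMean (hψ n) (hθ n).isTestPlus
  · exact (T.continuous.tendsto f).comp (tendsto_clm_apply_of_tendsto hM (hMf f) (hMf f))
  · calc ‖(T ∘L M n) ∘L M n‖ ≤ ‖T‖ * ‖M n‖ * ‖M n‖ :=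
          (opNorm_comp_le _ _).trans (by gcongr; exact opNorm_comp_le _ _)
      _ ≤ ‖T‖ * C * C := by
        have hC0 : 0 ≤ C := (norm_nonneg _).trans (hM n)
        gcongr <;> exact hM n
      _ = C * C * ‖T‖ := by ring

theorem IsConvOp.exists_isTest_tendsto (W : WHSpace) :
    ∃ C : ℝ, ∀ (φ : ℕ → ℝ → ℂ) (B : ℕ → W.E →L[ℂ] W.E) (T : W.E →L[ℂ] W.E) (D : ℝ),
      (∀ n, ContDiff ℝ ∞ (φ n) ∧ IsConvOp W (φ n) (B n)) →
      (∀ f, Tendsto (fun n => B n f) atTop (𝓝 (T f))) → (∀ n, ‖B n‖ ≤ D) →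
      ∃ (χ : ℕ → ℝ → ℂ) (A : ℕ → W.E →L[ℂ] W.E), (∀ n, IsTest (χ n) ∧ IsConvOp W (χ n) (A n)) ∧
        (∀ f, Tendsto (fun n => A n f) atTop (𝓝 (T f))) ∧ ∀ n, ‖A n‖ ≤ C * D := by
  obtain ⟨k, hk, hk1⟩ := exists_schwartzMap_hasCompactSupport_fourierInv ℝ
  obtain ⟨C, hC⟩ := W.Mod_bdd
  have hC0 : 0 ≤ C := (norm_nonneg _).trans (hC 0)
  have hsmooth : ContDiff ℝ ∞ (𝓕⁻ (k : ℝ → ℂ)) := by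
    rw [← SchwartzMap.fourierInv_coe]
    exact SchwartzMap.smooth _ ⊤
  refine ⟨(∫ a, ‖k a‖) * (C * C), fun φ B T D hφ hBT hB => ?_⟩
  let r (n : ℕ) : ℝ := 1 / (n + 1)
  have hr (n : ℕ) : r n ≠ 0 := Nat.one_div_pos_of_nat.ne'
  refine ⟨fun n y => 𝓕⁻ (k : ℝ → ℂ) (r n * y) * φ n y, fun n => W.modulationMean k (r n) (B n),
    fun n => ⟨⟨?_, ?_⟩, ?_⟩, fun f => ?_, fun n => ?_⟩
  · exact (hsmooth.comp (contDiff_const.mul contDiff_id)).mul (hφ n).1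
  · exact (hk.comp_homeomorph (Homeomorph.mulLeft₀ (r n) (hr n))).mul_right
  · exact (hφ n).2.modulationMean (hφ n).1.continuous k.integrable (r n)
  · simpa only [hk1, one_smul] using W.tendsto_modulationMean_apply k.integrable
      tendsto_one_div_add_atTop_nhds_zero_nat hB hBT f
  · calc ‖W.modulationMean k (r n) (B n)‖ ≤ (∫ a, ‖k a‖) * (C * ‖B n‖ * C) :=
          W.norm_modulationMean_le k.integrable hC (r n) (B n)
      _ ≤ (∫ a, ‖k a‖) * (C * D * C) := by gcongr; exact hB n
      _ = (∫ a, ‖k a‖) * (C * C) * D := by ring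

end Approximation

/-- Every Wiener-Hopf operator `T` is the strong limit of operators
`T_{φ_n}` with `φ_n ∈ C_c^∞(ℝ)` and `‖T_{φ_n}‖ ≤ C ‖T‖`, `C` depending only on `E`. -/
theorem wienerHopf_approx (W : WHSpace) :
    ∃ C > 0, ∀ (T : W.E →L[ℂ] W.E), IsWienerHopf W T →
      ∃ (φ : ℕ → ℝ → ℂ) (A : ℕ → W.E →L[ℂ] W.E),
        (∀ n : ℕ, IsTest (φ n) ∧ IsConvOp W (φ n) (A n)) ∧
        (∀ f : W.E, Tendsto (fun n => ‖A n f - T f‖) atTop (nhds 0)) ∧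
        ∀ n : ℕ, ‖A n‖ ≤ C * ‖T‖ := by
  obtain ⟨C₁, hC₁⟩ := IsWienerHopf.exists_contDiff_isConvOp_tendsto W
  obtain ⟨C₂, hC₂⟩ := IsConvOp.exists_isTest_tendsto W
  refine ⟨max 1 (C₂ * C₁), by positivity, fun T hT => ?_⟩
  obtain ⟨ψ, B, hψ, hBT, hB⟩ := hC₁ T hT
  obtain ⟨φ, A, hφ, hAT, hA⟩ := hC₂ ψ B T (C₁ * ‖T‖) hψ hBT hB
  refine ⟨φ, A, hφ, fun f => tendsto_iff_norm_sub_tendsto_zero.1 (hAT f), fun n => ?_⟩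
  calc ‖A n‖ ≤ C₂ * (C₁ * ‖T‖) := hA n
    _ = C₂ * C₁ * ‖T‖ := (mul_assoc C₂ C₁ ‖T‖).symm
    _ ≤ max 1 (C₂ * C₁) * ‖T‖ := by gcongr; exact le_max_right _ _
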